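/- Let U be a consistent c.e. theory and let 𝒳, 𝒴 be sets of sentences with U ⦚ 𝒳 (every φ ∈ 𝒳 proves every axiom of U). If U is 𝒳-creative and effectively 𝒴-inseparable, then U is strongly effectively (𝒳 ∧ 𝒴)-inseparable: there is a partial computable Φ such that whenever W_i and W_j weakly biseparate U_p and 0_{U,r}, Φ(i, j) converges, Φ(i, j) ∈ 𝒳 ∧ 𝒴, and Φ(i, j) ∉ W_i ∪ W_j. -/

import Mathlib

open FirstOrder FirstOrder.Language

namespace PourEl

/-! ## Recursion-theoretic notions -/

/-- The `i`-th computably enumerable subset of `ℕ` (the domain of the `i`-th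
partial computable function). -/
def WSet (i : ℕ) : Set ℕ :=
  {n | ((Denumerable.ofNat Nat.Partrec.Code i).eval n).Dom}

/-- A set of natural numbers is computably enumerable. -/
def CE (A : Set ℕ) : Prop := ∃ i, A = WSet i

/-- A set of natural numbers is computable. -/
def Comp (A : Set ℕ) : Prop := ComputablePred (· ∈ A)

/-- Disjoint sets `X`, `Y` are computably separable iff some computable set
contains `X` and is disjoint from `Y`. -/
def CompSeparable (X Y : Set ℕ) : Prop :=
  ∃ Z : Set ℕ, Comp Z ∧ X ⊆ Z ∧ Y ∩ Z = ∅

/-- Computable inseparability. -/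
def CompInseparable (X Y : Set ℕ) : Prop := ¬ CompSeparable X Y

/-- `Z` and `W` weakly biseparate `X` and `Y`. -/
def WeaklyBiseparate {α : Type*} (Z W X Y : Set α) : Prop :=
  X ⊆ Z ∧ Y ⊆ W ∧ Z ∩ Y = ∅ ∧ W ∩ X = ∅

/-- `Z` and `W` biseparate `X` and `Y`. -/
def Biseparate {α : Type*} (Z W X Y : Set α) : Prop :=
  WeaklyBiseparate Z W X Y ∧ Z ∩ W = ∅

/-! ## Logical notions -/

variable {L : FirstOrder.Language}

/-- Provability: `φ` is a first-order consequence of `U` (by Gödel completeness,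
semantic consequence). -/
def Prv (U : L.Theory) (φ : L.Sentence) : Prop := U ⊨ᵇ φ

/-- `U_p`: the set of theorems of `U`. -/
def Thms (U : L.Theory) : Set L.Sentence := {φ | Prv U φ}

/-- `U_r`: the set of refutable sentences of `U`. -/
def Refut (U : L.Theory) : Set L.Sentence := {φ | Prv U ∼φ}

/-- Consistency: `U ⊬ ⊥`. -/
def Consistent (U : L.Theory) : Prop := ¬ Prv U ⊥

/-- `φ` is independent of `U`: `U` proves neither `φ` nor `¬φ`. -/
def Independent (U : L.Theory) (φ : L.Sentence) : Prop := ¬ Prv U φ ∧ ¬ Prv U ∼φ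

/-- `U` is incomplete: some sentence is independent of it. -/
def Incomplete (U : L.Theory) : Prop := ∃ φ, Independent U φ

/-- Mono-consequence: `U ⊢_m φ` iff `ψ ⊢ φ` for some `ψ ∈ U`. -/
def MPrv (U : L.Theory) (φ : L.Sentence) : Prop := ∃ ψ ∈ U, Prv {ψ} φ

/-- `U_m`: the set of mono-theorems of `U`. -/
def MThms (U : L.Theory) : Set L.Sentence := {φ | MPrv U φ}

/-- `U_n`: the set of mono-refutable sentences of `U`. -/
def MRefut (U : L.Theory) : Set L.Sentence := {φ | MPrv U ∼φ}

/-- Mono-consistency: every member is consistent by itself. -/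
def MonoConsistent (U : L.Theory) : Prop := ∀ ψ ∈ U, Consistent ({ψ} : L.Theory)

/-- `Û`: the set of all non-empty finite conjunctions of elements of `U`. -/
def hat (U : L.Theory) : L.Theory :=
  {φ | ∃ (ψ : L.Sentence) (l : List L.Sentence),
    ψ ∈ U ∧ (∀ χ ∈ l, χ ∈ U) ∧ φ = l.foldl (· ⊓ ·) ψ}

/-- `U ⋓ V`. -/
def Cup (U V : L.Theory) : L.Theory :=
  {χ | ∃ φ ∈ U, ∃ ψ ∈ V, χ = φ ⊓ ψ}

/-- `U ⋐ V`: for every `φ ∈ U` and `ψ ∈ V` there is `ρ ∈ V` with `ρ ⊢ φ ∧ ψ`. -/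
def Ssub (U V : L.Theory) : Prop :=
  ∀ φ ∈ U, ∀ ψ ∈ V, ∃ ρ ∈ V, Prv {ρ} (φ ⊓ ψ)

/-! ## Gödel numbering -/

/-- A Gödel numbering of the sentences of a (countable) signature: a bijective
coding of sentences by natural numbers that is effective for the basic syntactic
operations, and for which the theorems of a c.e. theory can be effectively
enumerated from an index of the theory. -/
structure Numbering (L : FirstOrder.Language) where
  equiv : L.Sentence ≃ ℕ
  neg_comp : Computable fun n => equiv ∼(equiv.symm n)
  inf_comp : Computable₂ fun m n => equiv (equiv.symm m ⊓ equiv.symm n)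
  imp_comp : Computable₂ fun m n => equiv (equiv.symm m ⟹ equiv.symm n)
  iff_comp : Computable₂ fun m n => equiv (equiv.symm m ⇔ equiv.symm n)
  thmIdx : ℕ → ℕ
  thmIdx_comp : Computable thmIdx
  thmIdx_spec : ∀ i, WSet (thmIdx i) = equiv '' Thms (equiv.symm '' WSet i)

namespace Numbering

variable (g : Numbering L)

/-- The code of a sentence. -/
def code (φ : L.Sentence) : ℕ := g.equiv φ

/-- The set of codes of a set of sentences. -/
def codes (S : Set L.Sentence) : Set ℕ := g.equiv '' S

/-- The theory axiomatised by the `i`-th c.e. set (identified with a set of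
sentences via the numbering). -/
def thy (i : ℕ) : L.Theory := g.equiv.symm '' WSet i

/-- The theory `U` is computably enumerable (with respect to the numbering). -/
def CEThy (U : L.Theory) : Prop := CE (g.codes U)

end Numbering



/-- `U` is effectively `X`-inseparable: a partial computable function uniformly
produces, from any pair of c.e. sets weakly biseparating `U_p` and `U_r`, a
sentence in `X` lying outside both. -/
def EffXInseparable (g : Numbering L) (U : L.Theory) (X : Set L.Sentence) : Prop :=
  ∃ Φ : ℕ → ℕ →. ℕ, Partrec₂ Φ ∧ ∀ i j,
    WeaklyBiseparate (WSet i) (WSet j) (g.codes (Thms U)) (g.codes (Refut U)) →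
    ∃ n ∈ Φ i j, n ∈ g.codes X ∧ n ∉ WSet i ∪ WSet j

/-- `U` is `X`-creative. -/
def XCreative (g : Numbering L) (U : L.Theory) (X : Set L.Sentence) : Prop :=
  ∃ Φ : ℕ →. ℕ, Partrec Φ ∧ ∀ i, g.codes (Thms U) ∩ WSet i = ∅ →
    ∃ n ∈ Φ i, n ∈ g.codes X ∧ n ∉ g.codes (Thms U) ∪ WSet i

/-!
Let `W` be disjoint from `U_p`. As `U_p` is closed under conjunction, it is also disjoint from
`{φ | ∃ θ ∈ U_p, φ ∧ θ ∈ W}`, so creativity yields `φ ∈ X` with `φ ∧ θ ∉ W` for every theorem `θ`.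
Because `φ` proves `U`, the map `ψ ↦ φ ∧ ψ` sends `U_r` into `0_{U,r}`, and therefore a weak
biseparation `Z`, `W` of `U_p` and `0_{U,r}` pulls back along it to the weak biseparation
`U_p ∪ {ψ | φ ∧ ψ ∈ Z}`, `{ψ | φ ∧ ψ ∈ W}` of `U_p` and `U_r`. Any `ψ ∈ Y` outside both of these
sets gives `φ ∧ ψ ∉ Z ∪ W`. Indices of all sets involved are computed by the s-m-n theorem.
-/

section Enumerability

open Encodable Nat.Partrec

variable {α β : Type*} [Primcodable α] [Primcodable β]

theorem rePred_and {p q : α → Prop} (hp : REPred p) (hq : REPred q) :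
    REPred fun a => p a ∧ q a :=
  (Partrec.dom_re (Partrec.bind hp (Partrec.comp hq Computable.fst).to₂)).of_eq fun _ =>
    ⟨fun ⟨ha, hb⟩ => ⟨ha.1, hb.1⟩, fun ⟨ha, hb⟩ => ⟨⟨ha, trivial⟩, hb, trivial⟩⟩

theorem rePred_or {p q : α → Prop} (hp : REPred p) (hq : REPred q) :
    REPred fun a => p a ∨ q a := by
  obtain ⟨f, hf, hfpq⟩ := Partrec.merge' hp hq
  exact hf.dom_re.of_eq fun a => (hfpq a).2.trans <|
    or_congr ⟨fun h => h.1, fun h => ⟨h, trivial⟩⟩ ⟨fun h => h.1, fun h => ⟨h, trivial⟩⟩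

theorem exists_code_dom_iff {p : α → Prop} (hp : REPred p) :
    ∃ c : Code, ∀ n, (c.eval n).Dom ↔ ∃ a, decode n = some a ∧ p a := by
  obtain ⟨c, hc⟩ := Code.exists_code.1 hp
  refine ⟨c, fun n => ?_⟩
  simp [hc, Part.dom_iff_mem, Part.mem_assert_iff]

theorem rePred_exists {p : α → β → Prop} (hp : REPred fun x : α × β => p x.1 x.2) :
    REPred fun a => ∃ b, p a b := by
  obtain ⟨c, hc⟩ := exists_code_dom_iff hp
  -- Dovetailing: `m` codes a pair (code of a candidate for `b`, bound on the computation).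
  have hsearch : Computable₂ fun (a : α) (m : ℕ) =>
      c.evaln m.unpair.2 (Nat.pair (encode a) m.unpair.1) := by
    have hunpair : Computable fun x : α × ℕ => x.2.unpair :=
      Computable.unpair.comp Computable.snd
    exact Code.primrec_evaln.to_comp.comp
      (((Computable.snd.comp hunpair).pair (Computable.const c)).pair
        (Primrec₂.natPair.to_comp.comp (Computable.encode.comp Computable.fst)
          (Computable.fst.comp hunpair)))
  refine (Partrec.rfindOpt hsearch).dom_re.of_eq fun a => ?_
  calc (Nat.rfindOpt fun m => c.evaln m.unpair.2 (Nat.pair (encode a) m.unpair.1)).Dom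
      ↔ ∃ m y, y ∈ c.evaln (Nat.unpair m).2 (Nat.pair (encode a) m.unpair.1) :=
        Nat.rfindOpt_dom
    _ ↔ ∃ n, (c.eval (Nat.pair (encode a) n)).Dom := by
        simp only [Part.dom_iff_mem, Code.evaln_complete]
        exact ⟨fun ⟨m, y, h⟩ => ⟨_, y, _, h⟩,
          fun ⟨n, y, k, h⟩ => ⟨Nat.pair n k, y, by simpa only [Nat.unpair_pair] using h⟩⟩
    _ ↔ ∃ b, p a b := by
        simp only [hc]
        refine ⟨?_, fun ⟨b, hb⟩ => ⟨encode b, (a, b), by simp, hb⟩⟩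
        rintro ⟨n, ⟨a', b⟩, hdecode, hb⟩
        obtain ⟨rfl, -⟩ : a' = a ∧ decode n = some b := by
          simpa [eq_comm, and_comm] using hdecode
        exact ⟨b, hb⟩

theorem rePred_mem_wSet {i n : α → ℕ} (hi : Computable i) (hn : Computable n) :
    REPred fun a => n a ∈ WSet (i a) :=
  Partrec.dom_re <| Code.eval_part.comp ((Computable.ofNat Code).comp hi) hn

theorem CE.rePred_mem {A : Set ℕ} (hA : CE A) {n : α → ℕ} (hn : Computable n) :
    REPred fun a => n a ∈ A := by
  obtain ⟨i, rfl⟩ := hA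
  exact rePred_mem_wSet (Computable.const i) hn

/-- The s-m-n theorem, for uniformly c.e. families of sets. -/
theorem exists_computable_wSet_eq {A : α → Set ℕ} (hA : REPred fun x : α × ℕ => x.2 ∈ A x.1) :
    ∃ k : α → ℕ, Computable k ∧ ∀ a, WSet (k a) = A a := by
  obtain ⟨c, hc⟩ := exists_code_dom_iff hA
  refine ⟨fun a => encode (c.curry (encode a)), ?_, fun a => ?_⟩
  · exact Computable.encode.comp
      (Code.primrec₂_curry.to_comp.comp (Computable.const c) Computable.encode)
  · ext n
    simp [WSet, Code.eval_curry, hc]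

end Enumerability

section Inseparability

/-- `P` is creative with witnesses in `X`: a partial computable function takes every index of a
c.e. set disjoint from `P` to an element of `X` outside both sets. For `P = U_p` this is
`XCreative`. -/
def CreativeIn (P X : Set ℕ) : Prop :=
  ∃ Φ : ℕ →. ℕ, Partrec Φ ∧ ∀ i, P ∩ WSet i = ∅ → ∃ n ∈ Φ i, n ∈ X ∧ n ∉ P ∪ WSet i

/-- `P` and `R` are effectively inseparable with witnesses in `Y`: a partial computable function
takes every pair of indices of c.e. sets weakly biseparating `P` and `R` to an element of `Y`
outside both c.e. sets. `EffXInseparable` is the case `P = U_p`, `R = U_r`, and the strong version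
is the case `P = U_p`, `R = 0_{U,r}`. -/
def EffInseparableIn (P R Y : Set ℕ) : Prop :=
  ∃ Φ : ℕ → ℕ →. ℕ, Partrec₂ Φ ∧ ∀ i j, WeaklyBiseparate (WSet i) (WSet j) P R →
    ∃ n ∈ Φ i j, n ∈ Y ∧ n ∉ WSet i ∪ WSet j

theorem WeaklyBiseparate.union_preimage {α β : Type*} {c : α → β} {P R : Set α}
    {Z W Q R₀ : Set β} (h : WeaklyBiseparate Z W Q R₀) (hPR : P ∩ R = ∅)
    (hR : Set.MapsTo c R R₀) (hP : c ⁻¹' W ∩ P = ∅) :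
    WeaklyBiseparate (P ∪ c ⁻¹' Z) (c ⁻¹' W) P R := by
  obtain ⟨-, hR₀W, hZR₀, -⟩ := h
  have hZR : c ⁻¹' Z ∩ R = ∅ := Set.eq_empty_of_forall_notMem fun b ⟨hbZ, hbR⟩ =>
    Set.eq_empty_iff_forall_notMem.1 hZR₀ (c b) ⟨hbZ, hR hbR⟩
  exact ⟨Set.subset_union_left, fun b hb => hR₀W (hR hb),
    by rw [Set.union_inter_distrib_right, hPR, hZR, Set.union_empty], hP⟩

variable {P : Set ℕ} {f : ℕ → ℕ → ℕ}

theorem exists_computable_wSet_eq_exists_mem (hP : CE P) (hf : Computable₂ f) :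
    ∃ k : ℕ → ℕ, Computable k ∧ ∀ j, WSet (k j) = {a | ∃ b ∈ P, f a b ∈ WSet j} :=
  exists_computable_wSet_eq <| rePred_exists <|
    rePred_and (hP.rePred_mem Computable.snd) <|
      rePred_mem_wSet (Computable.fst.comp Computable.fst) <|
        hf.comp (Computable.snd.comp Computable.fst) Computable.snd

theorem rePred_mem_preimage_wSet (hf : Computable₂ f) :
    REPred fun x : (ℕ × ℕ) × ℕ => x.2 ∈ f x.1.1 ⁻¹' WSet x.1.2 :=
  rePred_mem_wSet (Computable.snd.comp Computable.fst) <|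
    hf.comp (Computable.fst.comp Computable.fst) Computable.snd

theorem exists_computable_wSet_eq_preimage (hf : Computable₂ f) :
    ∃ k : ℕ × ℕ → ℕ, Computable k ∧ ∀ x, WSet (k x) = f x.1 ⁻¹' WSet x.2 :=
  exists_computable_wSet_eq (rePred_mem_preimage_wSet hf)

theorem exists_computable_wSet_eq_union_preimage (hP : CE P) (hf : Computable₂ f) :
    ∃ k : ℕ × ℕ → ℕ, Computable k ∧ ∀ x, WSet (k x) = P ∪ f x.1 ⁻¹' WSet x.2 :=
  exists_computable_wSet_eq <|
    rePred_or (hP.rePred_mem Computable.snd) (rePred_mem_preimage_wSet hf)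

theorem CreativeIn.exists_preimage_inter_eq_empty {X : Set ℕ} (hX : CreativeIn P X) (hP : CE P)
    (hf : Computable₂ f) (hPf : Set.image2 f P P ⊆ P) :
    ∃ Φ : ℕ →. ℕ, Partrec Φ ∧ ∀ j, WSet j ∩ P = ∅ →
      ∃ a ∈ Φ j, a ∈ X ∧ f a ⁻¹' WSet j ∩ P = ∅ := by
  obtain ⟨Φ, hΦ, hΦX⟩ := hX
  obtain ⟨k, hk, hWk⟩ := exists_computable_wSet_eq_exists_mem hP hf
  refine ⟨fun j => Φ (k j), hΦ.comp hk, fun j hj => ?_⟩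
  have hdisj : P ∩ WSet (k j) = ∅ := by
    rw [hWk]
    refine Set.eq_empty_of_forall_notMem ?_
    rintro a ⟨ha, b, hb, hab⟩
    exact Set.eq_empty_iff_forall_notMem.1 hj (f a b) ⟨hab, hPf ⟨a, ha, b, hb, rfl⟩⟩
  obtain ⟨a, haΦ, haX, ha⟩ := hΦX (k j) hdisj
  rw [hWk] at ha
  exact ⟨a, haΦ, haX, Set.eq_empty_of_forall_notMem fun b ⟨hbW, hbP⟩ => ha (.inr ⟨b, hbP, hbW⟩)⟩

theorem EffInseparableIn.image2 {R R₀ X Y : Set ℕ} (hY : EffInseparableIn P R Y)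
    (hX : CreativeIn P X) (hP : CE P) (hPR : P ∩ R = ∅) (hf : Computable₂ f)
    (hPf : Set.image2 f P P ⊆ P) (hRf : Set.image2 f X R ⊆ R₀) :
    EffInseparableIn P R₀ (Set.image2 f X Y) := by
  obtain ⟨Φ, hΦ, hΦX⟩ := hX.exists_preimage_inter_eq_empty hP hf hPf
  obtain ⟨Ψ, hΨ, hΨY⟩ := hY
  obtain ⟨k, hk, hWk⟩ := exists_computable_wSet_eq_union_preimage hP hf
  obtain ⟨l, hl, hWl⟩ := exists_computable_wSet_eq_preimage hf
  refine ⟨fun i j => (Φ j).bind fun a => (Ψ (k (a, i)) (l (a, j))).map (f a), ?_, ?_⟩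
  · have hΨkl : Partrec fun x : (ℕ × ℕ) × ℕ => Ψ (k (x.2, x.1.1)) (l (x.2, x.1.2)) :=
      hΨ.comp (hk.comp (Computable.snd.pair (Computable.fst.comp Computable.fst)))
        (hl.comp (Computable.snd.pair (Computable.snd.comp Computable.fst)))
    exact (hΦ.comp Computable.snd).bind
      (hΨkl.map (hf.comp (Computable.snd.comp Computable.fst) Computable.snd))
  · intro i j hij
    obtain ⟨a, haΦ, haX, haW⟩ := hΦX j hij.2.2.2
    have hslice : WeaklyBiseparate (WSet (k (a, i))) (WSet (l (a, j))) P R := by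
      rw [hWk, hWl]
      exact hij.union_preimage hPR (fun b hb => hRf ⟨a, haX, b, hb, rfl⟩) haW
    obtain ⟨b, hbΨ, hbY, hb⟩ := hΨY _ _ hslice
    rw [hWk, hWl] at hb
    exact ⟨f a b, Part.mem_bind haΦ (Part.mem_map _ hbΨ), ⟨a, haX, b, hbY, rfl⟩,
      fun h => hb (h.imp_left .inr)⟩

end Inseparability

section Logic

variable {U : L.Theory} {φ ψ : L.Sentence}

theorem prv_inf (hφ : Prv U φ) (hψ : Prv U ψ) : Prv U (φ ⊓ ψ) :=
  Theory.models_sentence_iff.2 fun M =>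
    (Sentence.realize_inf M).2 ⟨hφ.realize_sentence M, hψ.realize_sentence M⟩

theorem Consistent.thms_inter_refut (hU : Consistent U) : Thms U ∩ Refut U = ∅ :=
  Set.eq_empty_of_forall_notMem fun _ ⟨hφ, hφn⟩ => hU <| Theory.models_sentence_iff.2 fun M =>
    ((Sentence.realize_not M).1 (hφn.realize_sentence M) (hφ.realize_sentence M)).elim

theorem prv_empty_not_inf (h : Prv {φ} ∼ψ) : Prv ∅ ∼(φ ⊓ ψ) := by
  refine Theory.models_sentence_iff.2 fun M => (Sentence.realize_not M).2 fun hM => ?_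
  obtain ⟨hφ, hψ⟩ := (Sentence.realize_inf M).1 hM
  have : M ⊨ ({φ} : L.Theory) := Theory.model_singleton_iff.2 hφ
  exact (Sentence.realize_not M).1 (h.realize_sentence M) hψ

theorem cup_eq_image2 (S T : Set L.Sentence) : Cup S T = Set.image2 (· ⊓ ·) S T := by
  simp only [Cup, Set.image2, eq_comm]

end Logic

namespace Numbering

variable (g : Numbering L) {U : L.Theory}

/-- Conjunction of sentences, as an operation on codes. -/
def inf (m n : ℕ) : ℕ := g.equiv (g.equiv.symm m ⊓ g.equiv.symm n)

theorem image2_inf_codes (S T : Set L.Sentence) :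
    Set.image2 g.inf (g.codes S) (g.codes T) = g.codes (Cup S T) := by
  rw [cup_eq_image2]
  exact (Set.image_image2_distrib fun φ ψ => by simp only [inf, Equiv.symm_apply_apply]).symm

theorem ce_codes_thms (hU : g.CEThy U) : CE (g.codes (Thms U)) := by
  obtain ⟨u, hu⟩ := hU
  refine ⟨g.thmIdx u, ?_⟩
  rw [g.thmIdx_spec, ← hu, codes, codes, Equiv.symm_image_image]

theorem codes_thms_inter_codes_refut (hU : Consistent U) :
    g.codes (Thms U) ∩ g.codes (Refut U) = ∅ := by
  rw [codes, codes, ← Set.image_inter g.equiv.injective, hU.thms_inter_refut, Set.image_empty]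

end Numbering

/-- Suppose every `φ ∈ X` proves every axiom of `U`
(`U ⦚ X`). If `U` is `X`-creative and effectively `Y`-inseparable, then `U` is
strongly effectively `(X ∧ Y)`-inseparable, where
`X ∧ Y = {φ ⊓ ψ | φ ∈ X, ψ ∈ Y}` and the relevant pair is `(U_p, 0_{U,r})`. -/
theorem statement18 {L : FirstOrder.Language} (g : Numbering L) (U : L.Theory)
    (hU : g.CEThy U) (hcon : Consistent U)
    (X Y : Set L.Sentence)
    (hdom : ∀ φ ∈ X, ∀ ψ ∈ U, Prv ({φ} : L.Theory) ψ)
    (hcr : XCreative g U X) (hins : EffXInseparable g U Y) :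
    ∃ Φ : ℕ → ℕ →. ℕ, Partrec₂ Φ ∧ ∀ i j,
      WeaklyBiseparate (WSet i) (WSet j)
        (g.codes (Thms U)) (g.codes (Refut (∅ : L.Theory))) →
      ∃ n ∈ Φ i j, n ∈ g.codes (Cup X Y) ∧ n ∉ WSet i ∪ WSet j := by
  have hthms : Cup (Thms U) (Thms U) ⊆ Thms U := by
    rintro _ ⟨φ, hφ, ψ, hψ, rfl⟩
    exact prv_inf hφ hψ
  have hrefut : Cup X (Refut U) ⊆ Refut ∅ := by
    rintro _ ⟨φ, hφ, ψ, hψ, rfl⟩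
    exact prv_empty_not_inf (Theory.models_of_models_theory (hdom φ hφ) hψ)
  have hsep : EffInseparableIn (g.codes (Thms U)) (g.codes (Refut U)) (g.codes Y) := hins
  rw [← g.image2_inf_codes X Y]
  refine hsep.image2 hcr (g.ce_codes_thms hU) (g.codes_thms_inter_codes_refut hcon)
    g.inf_comp ?_ ?_
  · exact (g.image2_inf_codes _ _).trans_subset (Set.image_mono hthms)
  · exact (g.image2_inf_codes _ _).trans_subset (Set.image_mono hrefut)

end PourEl
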